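/- Let K ⊆ ℝⁿ be a closed set, let q : ℝⁿ → (0, ∞) be a measurable, strictly positive function, and let π : ℝⁿ → [0, ∞) be measurable. Then the ghost sampling kernel Q_K is π·1_{Kᶜ}-irreducible with one step: for every x ∈ Kᶜ and every measurable A ⊆ ℝⁿ with ∫_{A ∩ Kᶜ} π(v) dv > 0, it holds that Q_K(x, A) > 0. -/

import Mathlib

open MeasureTheory

noncomputable def ell {n : ℕ} (K : Set (EuclideanSpace ℝ (Fin n)))
    (x φ : EuclideanSpace ℝ (Fin n)) (r : ℝ) : ℝ :=
  ∫ t in (0:ℝ)..r, Set.indicator Kᶜ (fun _ => (1:ℝ)) (x + t • φ)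

open Classical in
noncomputable def ghost {n : ℕ} (K : Set (EuclideanSpace ℝ (Fin n)))
    (q : EuclideanSpace ℝ (Fin n) → ℝ)
    (x y : EuclideanSpace ℝ (Fin n)) : ℝ :=
  if y = x then q 0
  else
    q ((ell K x (‖y - x‖⁻¹ • (y - x)) ‖y - x‖) • (‖y - x‖⁻¹ • (y - x)))
      * (ell K x (‖y - x‖⁻¹ • (y - x)) ‖y - x‖ / ‖y - x‖) ^ (n - 1)
      * Set.indicator Kᶜ (fun _ => (1:ℝ)) y

/-!
Since `Kᶜ` contains a neighbourhood of `x`, every ray from `x` stays outside `K` for a positive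
time, so `ell K x φ r > 0` for all `r > 0`. As `q` is positive, the density `ghost K q x` is then
positive exactly on `Kᶜ`: it charges every subset of `Kᶜ` of positive measure.
-/

section

open Filter Set
open scoped ENNReal Topology

theorem intervalIntegrable_indicator_const_comp {α E : Type*} [MeasurableSpace α]
    [NormedAddCommGroup E] {s : Set α} {γ : ℝ → α} {μ : Measure ℝ} [IsLocallyFiniteMeasure μ]
    (hs : MeasurableSet s) (hγ : Measurable γ) (c : E) (a b : ℝ) :
    IntervalIntegrable (fun t => s.indicator (fun _ => c) (γ t)) μ a b := by
  have h_measurable : StronglyMeasurable fun t => s.indicator (fun _ => c) (γ t) :=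
    (stronglyMeasurable_const.indicator hs).comp_measurable hγ
  refine (intervalIntegrable_const (c := c)).mono_fun h_measurable.aestronglyMeasurable ?_
  exact .of_forall fun t => norm_indicator_le_norm_self (fun _ => c) (γ t)

variable {n : ℕ} {K : Set (EuclideanSpace ℝ (Fin n))} {q : EuclideanSpace ℝ (Fin n) → ℝ}
  {x y φ : EuclideanSpace ℝ (Fin n)} {r : ℝ}

theorem ell_eq_mul_integral_zero_one (K : Set (EuclideanSpace ℝ (Fin n)))
    (x φ : EuclideanSpace ℝ (Fin n)) (r : ℝ) :
    ell K x φ r = r * ∫ t in (0 : ℝ)..1, Kᶜ.indicator (fun _ => (1 : ℝ)) (x + (r * t) • φ) := by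
  rw [intervalIntegral.mul_integral_comp_mul_left
    (f := fun t => Kᶜ.indicator (fun _ => (1 : ℝ)) (x + t • φ)), mul_zero, mul_one, ell]

theorem measurable_ell (hK : MeasurableSet K) :
    Measurable fun p : EuclideanSpace ℝ (Fin n) × EuclideanSpace ℝ (Fin n) × ℝ =>
      ell K p.1 p.2.1 p.2.2 := by
  -- Rescaled to the fixed interval `(0, 1]`, the integral depends measurably on its parameters.
  simp only [ell_eq_mul_integral_zero_one, intervalIntegral.integral_of_le zero_le_one]
  have h_indicator : Measurable
      fun p : (EuclideanSpace ℝ (Fin n) × EuclideanSpace ℝ (Fin n) × ℝ) × ℝ =>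
        Kᶜ.indicator (fun _ => (1 : ℝ)) (p.1.1 + (p.1.2.2 * p.2) • p.1.2.1) :=
    (measurable_const.indicator hK.compl).comp (by fun_prop)
  have h_integral := h_indicator.stronglyMeasurable.integral_prod_right'
    (ν := volume.restrict (Ioc (0 : ℝ) 1))
  exact measurable_snd.snd.mul h_integral.measurable

theorem ell_pos (hK : MeasurableSet K) (hφ : ∀ᶠ t in 𝓝[>] (0 : ℝ), x + t • φ ∈ Kᶜ)
    (hr : 0 < r) : 0 < ell K x φ r := by
  obtain ⟨u, hu, h_outside⟩ := mem_nhdsGT_iff_exists_Ioo_subset.1 hφ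
  rw [ell, intervalIntegral.integral_pos_iff_support_of_nonneg_ae
    (.of_forall fun t => indicator_nonneg (fun _ _ => zero_le_one) _)
    (intervalIntegrable_indicator_const_comp hK.compl (by fun_prop) 1 0 r)]
  refine ⟨hr, (Measure.measure_Ioo_pos volume).2 (lt_min hu hr) |>.trans_le (measure_mono ?_)⟩
  rintro t ⟨ht_pos, ht_lt⟩
  obtain ⟨htu, htr⟩ := lt_min_iff.1 ht_lt
  have ht : x + t • φ ∈ Kᶜ := h_outside ⟨ht_pos, htu⟩
  exact ⟨by simp [indicator_of_mem ht], ht_pos, htr.le⟩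

theorem ell_pos_of_compl_mem_nhds (hK : MeasurableSet K) (hx : Kᶜ ∈ 𝓝 x) (hr : 0 < r) :
    0 < ell K x φ r := by
  have h_ray : Tendsto (fun t : ℝ => x + t • φ) (𝓝 0) (𝓝 x) :=
    Continuous.tendsto' (by fun_prop) 0 x (by rw [zero_smul, add_zero])
  exact ell_pos hK ((h_ray.mono_left nhdsWithin_le_nhds).eventually_mem hx) hr

theorem measurable_ghost (hK : MeasurableSet K) (hq : Measurable q) :
    Measurable fun p : EuclideanSpace ℝ (Fin n) × EuclideanSpace ℝ (Fin n) =>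
      ghost K q p.1 p.2 := by
  have h_dir : Measurable fun p : EuclideanSpace ℝ (Fin n) × EuclideanSpace ℝ (Fin n) =>
      ‖p.2 - p.1‖⁻¹ • (p.2 - p.1) := by fun_prop
  have h_dist : Measurable fun p : EuclideanSpace ℝ (Fin n) × EuclideanSpace ℝ (Fin n) =>
      ‖p.2 - p.1‖ := by fun_prop
  have h_ell := (measurable_ell hK).comp (measurable_fst.prodMk (h_dir.prodMk h_dist))
  have h_indicator : Measurable (Kᶜ.indicator fun _ => (1 : ℝ)) :=
    measurable_const.indicator hK.compl
  exact Measurable.ite (measurableSet_eq_fun measurable_snd measurable_fst) measurable_const <|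
    ((hq.comp (h_ell.smul h_dir)).mul ((h_ell.div h_dist).pow_const (n - 1))).mul
      (h_indicator.comp measurable_snd)

theorem ghost_pos_iff (hK : MeasurableSet K) (hq : ∀ z, 0 < q z) (hx : Kᶜ ∈ 𝓝 x) :
    0 < ghost K q x y ↔ y ∈ Kᶜ := by
  rw [ghost]
  split_ifs with hyx
  · exact iff_of_true (hq 0) (hyx ▸ mem_of_mem_nhds hx)
  have h_norm : 0 < ‖y - x‖ := norm_sub_pos_iff.2 hyx
  have h_ell := ell_pos_of_compl_mem_nhds (φ := ‖y - x‖⁻¹ • (y - x)) hK hx h_norm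
  rw [mul_pos_iff_of_pos_left (mul_pos (hq _) (pow_pos (div_pos h_ell h_norm) _))]
  by_cases hy : y ∈ Kᶜ <;> simp [hy]

theorem setLIntegral_ghost_pos_iff (hK : MeasurableSet K) (hqm : Measurable q)
    (hq : ∀ z, 0 < q z) (hx : Kᶜ ∈ 𝓝 x) (μ : Measure (EuclideanSpace ℝ (Fin n)))
    (A : Set (EuclideanSpace ℝ (Fin n))) :
    0 < ∫⁻ y in A, ENNReal.ofReal (ghost K q x y) ∂μ ↔ 0 < μ (A ∩ Kᶜ) := by
  have h_support : (Function.support fun y => ENNReal.ofReal (ghost K q x y)) = Kᶜ := by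
    ext y
    rw [Function.mem_support, ← pos_iff_ne_zero, ENNReal.ofReal_pos, ghost_pos_iff hK hq hx]
  rw [setLIntegral_pos_iff (measurable_ghost hK hqm).of_uncurry_left.ennreal_ofReal, h_support,
    inter_comm]

theorem ghost_irreducible_general (hK : MeasurableSet K) (hqm : Measurable q)
    (hq : ∀ z, 0 < q z) (hx : Kᶜ ∈ 𝓝 x) (μ : Measure (EuclideanSpace ℝ (Fin n)))
    (f : EuclideanSpace ℝ (Fin n) → ℝ≥0∞) (A : Set (EuclideanSpace ℝ (Fin n)))
    (hA : 0 < ∫⁻ v in A ∩ Kᶜ, f v ∂μ) :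
    0 < ∫⁻ y in A, ENNReal.ofReal (ghost K q x y) ∂μ := by
  rw [setLIntegral_ghost_pos_iff hK hqm hq hx, pos_iff_ne_zero]
  exact fun h_null => hA.ne' (setLIntegral_measure_zero _ f h_null)

end

/-- The ghost sampling kernel is `π·1_{Kᶜ}`-irreducible, with `n = 1` step. -/
theorem ghost_irreducible {n : ℕ} (K : Set (EuclideanSpace ℝ (Fin n)))
    (hK : IsClosed K)
    (q : EuclideanSpace ℝ (Fin n) → ℝ) (hqm : Measurable q) (hqpos : ∀ z, 0 < q z)
    (π : EuclideanSpace ℝ (Fin n) → ℝ) (hπm : Measurable π) (hπ0 : ∀ z, 0 ≤ π z) :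
    ∀ x ∈ Kᶜ, ∀ A : Set (EuclideanSpace ℝ (Fin n)), MeasurableSet A →
      0 < ∫⁻ v in A ∩ Kᶜ, ENNReal.ofReal (π v) ∂volume →
      0 < ∫⁻ y in A, ENNReal.ofReal (ghost K q x y) ∂volume :=
  fun _ hx A _ hA => ghost_irreducible_general hK.measurableSet hqm hqpos
    (hK.isOpen_compl.mem_nhds hx) volume (fun v => ENNReal.ofReal (π v)) A hA
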